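/- The space ω* = βℕ∖ℕ has a weak P-point: there exists a nonprincipal ultrafilter U on ℕ such that for every sequence (U_n)_{n∈ℕ} of nonprincipal ultrafilters on ℕ, each distinct from U, there exists A ∈ U with A ∉ U_n for every n ∈ ℕ. -/

import Mathlib

open Set Filter Cardinal

namespace WeakPPoint

/-- The countable set carrying the independent linked family. -/
abbrev S : Type := Σ k : ℕ, (Set (Fin k) → Finset (Set (Fin k)))

/-- Trace of a set on `k`. -/
def tr (k : ℕ) (X : Set ℕ) : Set (Fin k) := {i | (i : ℕ) ∈ X}

/-- Kunen's independent linked family on `S`. -/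
def AS (Y X : Set ℕ) (n : ℕ) : Set S :=
  {p | (p.2 (tr p.1 Y)).card ≤ n ∧ tr p.1 X ∈ p.2 (tr p.1 Y)}

lemma tr_ne {X Y : Set ℕ} (h : X ≠ Y) : ∃ k, ∀ m, k ≤ m → tr m X ≠ tr m Y := by
  have : ∃ a, ¬ (a ∈ X ↔ a ∈ Y) := by
    by_contra hc
    push Not at hc
    exact h (Set.ext hc)
  obtain ⟨a, ha⟩ := this
  refine ⟨a + 1, fun m hm he => ha ?_⟩
  have := Set.ext_iff.1 he ⟨a, hm⟩
  simpa [tr] using this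

lemma tr_inj (s : Finset (Set ℕ)) : ∃ k, ∀ m, k ≤ m → Set.InjOn (tr m) s := by
  have : ∀ p : Set ℕ × Set ℕ, ∃ k, p.1 ≠ p.2 → ∀ m, k ≤ m → tr m p.1 ≠ tr m p.2 := by
    intro p
    by_cases h : p.1 = p.2
    · exact ⟨0, fun h' => absurd h h'⟩
    · obtain ⟨k, hk⟩ := tr_ne h
      exact ⟨k, fun _ => hk⟩
  choose f hf using this
  refine ⟨(s ×ˢ s).sup f, fun m hm X hX Y hY he => ?_⟩
  by_contra hne
  refine hf (X, Y) hne m (le_trans ?_ hm) he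
  exact Finset.le_sup (f := f) (Finset.mem_product.2 ⟨hX, hY⟩)

lemma AS_fin (Y : Set ℕ) (n : ℕ) (s : Finset (Set ℕ)) (hs : n < s.card) :
    {p : S | ∀ X ∈ s, p ∈ AS Y X n}.Finite := by
  classical
  obtain ⟨k, hk⟩ := tr_inj s
  have hfin : (⋃ m ∈ Finset.range k, Set.range (fun f => (⟨m, f⟩ : S))).Finite :=
    Set.Finite.biUnion (Finset.finite_toSet _) (fun m _ => Set.finite_range _)
  refine hfin.subset ?_
  rintro ⟨m, f⟩ hp
  simp only [Set.mem_iUnion, Finset.mem_range]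
  refine ⟨m, ?_, f, rfl⟩
  by_contra hm
  have hinj := hk m (not_lt.1 hm)
  have hsub : s.image (tr m) ⊆ f (tr m Y) := by
    intro Z hZ
    obtain ⟨X, hX, rfl⟩ := Finset.mem_image.1 hZ
    exact (hp X hX).2
  have h1 := Finset.card_le_card hsub
  rw [Finset.card_image_of_injOn hinj] at h1
  have hne : s.Nonempty := Finset.card_pos.1 (by omega)
  obtain ⟨X, hX⟩ := hne
  have := (hp X hX).1
  simp only at this
  omega

lemma AS_indep (t : Finset (Set ℕ)) (σ : Set ℕ → Finset (Set ℕ)) :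
    {p : S | ∀ Y ∈ t, ∀ X ∈ σ Y, p ∈ AS Y X (σ Y).card}.Infinite := by
  classical
  obtain ⟨k, hk⟩ := tr_inj t
  have key : ∀ m, ∃ f : Set (Fin (k + m)) → Finset (Set (Fin (k + m))),
      ∀ Y ∈ t, f (tr (k + m) Y) = (σ Y).image (tr (k + m)) := by
    intro m
    refine ⟨fun Z => if h : ∃ Y ∈ t, tr (k + m) Y = Z
      then (σ h.choose).image (tr (k + m)) else ∅, fun Y hY => ?_⟩
    have h : ∃ Y' ∈ t, tr (k + m) Y' = tr (k + m) Y := ⟨Y, hY, rfl⟩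
    have h2 : h.choose = Y :=
      hk (k + m) (Nat.le_add_right _ _) h.choose_spec.1 hY h.choose_spec.2
    simp only [dif_pos h]
    rw [h2]
  choose f hf using key
  refine Set.infinite_of_injective_forall_mem (f := fun m => (⟨k + m, f m⟩ : S)) ?_ ?_
  · intro a b hab
    have := congrArg Sigma.fst hab
    simpa using this
  · intro m Y hY X hX
    refine ⟨?_, ?_⟩
    · simp only [hf m Y hY]
      exact Finset.card_image_le
    · simp only [hf m Y hY]
      exact Finset.mem_image_of_mem _ hX

lemma exists_family : ∃ A : Set ℕ → Set ℕ → ℕ → Set ℕ,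
    (∀ Y X m n, m ≤ n → A Y X m ⊆ A Y X n) ∧
    (∀ Y n (s : Finset (Set ℕ)), n < s.card → {x | ∀ X ∈ s, x ∈ A Y X n}.Finite) ∧
    (∀ (t : Finset (Set ℕ)) (σ : Set ℕ → Finset (Set ℕ)),
      {x | ∀ Y ∈ t, ∀ X ∈ σ Y, x ∈ A Y X (σ Y).card}.Infinite) := by
  have : Infinite S := Infinite.of_injective (fun m => (⟨m, fun _ => ∅⟩ : S)) (by
    intro a b hab
    exact congrArg Sigma.fst hab)
  obtain ⟨e⟩ : Nonempty (ℕ ≃ S) := nonempty_equiv_of_countable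
  refine ⟨fun Y X n => e ⁻¹' AS Y X n, ?_, ?_, ?_⟩
  · intro Y X m n hmn x hx
    exact ⟨hx.1.trans hmn, hx.2⟩
  · intro Y n s hs
    exact (AS_fin Y n s hs).preimage e.injective.injOn
  · intro t σ
    have := AS_indep t σ
    exact this.preimage (by rw [e.surjective.range_eq]; exact Set.subset_univ _)

section
variable (A : Set ℕ → Set ℕ → ℕ → Set ℕ)

/-- A basic term of the family. -/
def T (t : Finset (Set ℕ)) (σ : Set ℕ → Finset (Set ℕ)) : Set ℕ :=
  {x | ∀ Y ∈ t, ∀ X ∈ σ Y, x ∈ A Y X (σ Y).card}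

/-- The rows in `K` are independent over `F`. -/
def Indep (F : Filter ℕ) (K : Set (Set ℕ)) : Prop :=
  ∀ (t : Finset (Set ℕ)) (σ : Set ℕ → Finset (Set ℕ)), (t : Set (Set ℕ)) ⊆ K →
    ∀ B ∈ F, (B ∩ T A t σ).Nonempty

/-- The task `C` has been dealt with. -/
def Solved (C : ℕ → Set ℕ) (F : Filter ℕ) : Prop :=
  (∃ n, (C n)ᶜ ∈ F) ∨ ∃ D : Set ℕ → Set ℕ, (∀ X, D X ∈ F) ∧
    ∀ s : Finset (Set ℕ), s.Nonempty → ({x | ∀ X ∈ s, x ∈ D X} \ C s.card).Finite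

variable {A}

lemma Indep.mono {F : Filter ℕ} {K K' : Set (Set ℕ)} (h : Indep A F K) (hK : K' ⊆ K) :
    Indep A F K' := fun t σ ht B hB => h t σ (ht.trans hK) B hB

lemma indep_iInf {ι : Type*} (G : Filter ℕ) (f : ι → Filter ℕ) (K : Set (Set ℕ))
    (hd : Directed (· ≥ ·) f) (hG : Indep A G K) (hle : ∀ i, f i ≤ G)
    (hf : ∀ i, Indep A (f i) K) : Indep A (G ⊓ ⨅ i, f i) K := by
  rcases isEmpty_or_nonempty ι with hι | hι
  · simpa [iInf_of_empty] using hG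
  · have : G ⊓ ⨅ i, f i = ⨅ i, f i :=
      inf_eq_right.2 ((iInf_le f (Classical.arbitrary ι)).trans (hle _))
    rw [this]
    intro t σ ht B hB
    obtain ⟨i, hi⟩ := (mem_iInf_of_directed hd B).1 hB
    exact hf i t σ ht B hi

lemma indep_T {F : Filter ℕ} {K : Set (Set ℕ)} (h : Indep A F K)
    (t : Finset (Set ℕ)) (σ : Set ℕ → Finset (Set ℕ)) (ht : (t : Set (Set ℕ)) ⊆ K) :
    Indep A (F ⊓ 𝓟 (T A t σ)) (K \ t) := by
  classical
  intro t' σ' ht' B hB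
  rw [mem_inf_principal] at hB
  obtain ⟨x, hx, hxT⟩ := h (t ∪ t') (fun Y => if Y ∈ t then σ Y else σ' Y) (by
    rw [Finset.coe_union]
    exact Set.union_subset ht (ht'.trans sdiff_subset)) _ hB
  refine ⟨x, hx ?_, ?_⟩
  · intro Y hY
    have := hxT Y (Finset.mem_union_left _ hY)
    simpa [hY] using this
  · intro Y hY
    have := hxT Y (Finset.mem_union_right _ hY)
    have hn : Y ∉ t := fun hh => (ht' hY).2 hh
    simpa [hn] using this

lemma step (hmono : ∀ Y X m n, m ≤ n → A Y X m ⊆ A Y X n)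
    (hfin : ∀ Y n (s : Finset (Set ℕ)), n < s.card → {x | ∀ X ∈ s, x ∈ A Y X n}.Finite)
    (C : ℕ → Set ℕ) (hC : Antitone C) (F : Filter ℕ) (K : Set (Set ℕ))
    (h : Indep A F K) (hK : K.Nonempty) :
    ∃ F' K', F' ≤ F ∧ K' ⊆ K ∧ (K \ K').Finite ∧ Indep A F' K' ∧ Solved C F' := by
  classical
  by_cases hcase : ∀ n, Indep A (F ⊓ 𝓟 (C n)) K
  · have h1 : Indep A (F ⊓ ⨅ n, F ⊓ 𝓟 (C n)) K := by
      refine indep_iInf _ _ _ ?_ h (fun _ => inf_le_left) hcase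
      refine directed_of_isDirected_le ?_
      intro a b hab
      exact inf_le_inf_left _ (principal_mono.2 (hC hab))
    set G := F ⊓ ⨅ n, F ⊓ 𝓟 (C n) with hGdef
    have hCG : ∀ n, C n ∈ G := by
      intro n
      have : G ≤ 𝓟 (C n) := inf_le_right.trans ((iInf_le _ n).trans inf_le_right)
      exact le_principal_iff.1 this
    have hGF : G ≤ F := inf_le_left
    clear_value G
    obtain ⟨j, hj⟩ := hK
    let D : Set ℕ → Set ℕ := fun X => {x | ∀ m, x ∈ C (m + 1) ∨ x ∈ A j X m}
    let E : Finset (Set ℕ) → Filter ℕ := fun s => G ⊓ 𝓟 {x | ∀ X ∈ s, x ∈ D X}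
    have h2 : Indep A (G ⊓ ⨅ s, E s) (K \ {j}) := by
      refine indep_iInf _ _ _ ?_ (h1.mono sdiff_subset) (fun _ => inf_le_left) ?_
      · refine directed_of_isDirected_le ?_
        intro a b hab
        refine inf_le_inf_left _ (principal_mono.2 ?_)
        intro x hx X hX
        exact hx X (hab hX)
      · intro s
        have h3 := indep_T h1 {j} (fun _ => s) (by simpa using hj)
        rw [Finset.coe_singleton] at h3
        intro t σ ht B hB
        refine h3 t σ ht B ?_
        rw [mem_inf_principal] at hB ⊢
        filter_upwards [hB, hCG s.card] with x hx hxC hxT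
        refine hx ?_
        intro X hX m
        rcases lt_or_ge m s.card with hm | hm
        · exact Or.inl (hC hm hxC)
        · exact Or.inr (hmono j X _ _ hm (hxT j (Finset.mem_singleton_self j) X hX))
    refine ⟨_, K \ {j}, inf_le_left.trans hGF, sdiff_subset, ?_, h2, Or.inr ⟨D, ?_, ?_⟩⟩
    · refine (Set.finite_singleton j).subset ?_
      rintro x ⟨hx, hx'⟩
      by_contra hne
      exact hx' ⟨hx, hne⟩
    · intro X
      have : G ⊓ ⨅ s, E s ≤ 𝓟 {x | ∀ X' ∈ ({X} : Finset (Set ℕ)), x ∈ D X'} :=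
        inf_le_right.trans ((iInf_le _ {X}).trans inf_le_right)
      simpa using this
    · intro s hs
      have hpos := Finset.card_pos.2 hs
      refine (hfin j (s.card - 1) s (by omega)).subset ?_
      rintro x ⟨hx, hxC⟩ X hX
      rcases hx X hX (s.card - 1) with h' | h'
      · rw [Nat.sub_add_cancel hpos] at h'
        exact absurd h' hxC
      · exact h'
  · push Not at hcase
    obtain ⟨n, hn⟩ := hcase
    unfold Indep at hn
    push Not at hn
    obtain ⟨t, σ, ht, B, hB, hemp⟩ := hn
    refine ⟨F ⊓ 𝓟 (T A t σ), K \ t, inf_le_left, sdiff_subset, ?_, indep_T h t σ ht,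
      Or.inl ⟨n, ?_⟩⟩
    · refine t.finite_toSet.subset ?_
      rintro x ⟨hx, hx'⟩
      by_contra hne
      exact hx' ⟨hx, hne⟩
    · rw [mem_inf_principal] at hB ⊢
      filter_upwards [hB] with x hx hxT hxC
      have : x ∈ B ∩ T A t σ := ⟨hx hxC, hxT⟩
      rw [hemp] at this
      exact this

lemma Solved.mono {C : ℕ → Set ℕ} {F F' : Filter ℕ} (h : Solved C F) (hF : F' ≤ F) :
    Solved C F' := by
  rcases h with ⟨n, hn⟩ | ⟨D, hD, hs⟩
  · exact Or.inl ⟨n, hF hn⟩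
  · exact Or.inr ⟨D, fun X => hF (hD X), hs⟩

end

lemma mk_tasks : #(ℕ → Set ℕ) = 𝔠 := by
  simp

lemma mk_idx : #(Set ℕ) = 𝔠 := by
  simp

lemma exists_filter : ∃ F : Filter ℕ, F.NeBot ∧ F ≤ cofinite ∧
    ∀ C : ℕ → Set ℕ, Antitone C → Solved C F := by
  classical
  obtain ⟨A, hmono, hfin, hind⟩ := exists_family
  obtain ⟨r, hr, hord⟩ := Cardinal.exists_ord_eq (ℕ → Set ℕ)
  have hstep : ∀ (C : ℕ → Set ℕ) (p : Filter ℕ × Set (Set ℕ)), ∃ p' : Filter ℕ × Set (Set ℕ),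
      p'.1 ≤ p.1 ∧ p'.2 ⊆ p.2 ∧ (p.2 \ p'.2).Finite ∧
      (Indep A p.1 p.2 → p.2.Nonempty → Indep A p'.1 p'.2 ∧ (Antitone C → Solved C p'.1)) := by
    intro C p
    by_cases h : Antitone C ∧ Indep A p.1 p.2 ∧ p.2.Nonempty
    · obtain ⟨F', K', a, b, c, d, e⟩ := step hmono hfin C h.1 p.1 p.2 h.2.1 h.2.2
      exact ⟨(F', K'), a, b, c, fun _ _ => ⟨d, fun _ => e⟩⟩
    · refine ⟨p, le_rfl, subset_rfl, by simp, fun h1 h2 => ⟨h1, fun h3 => ?_⟩⟩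
      exact absurd ⟨h3, h1, h2⟩ h
  choose nx hnx1 hnx2 hnx3 hnx4 using hstep
  let Q : (ℕ → Set ℕ) → Filter ℕ × Set (Set ℕ) := hr.wf.fix (fun C ih =>
    nx C (cofinite ⊓ ⨅ s : {s // r s C}, (ih s.1 s.2).1, ⋂ s : {s // r s C}, (ih s.1 s.2).2))
  let P : (ℕ → Set ℕ) → Filter ℕ × Set (Set ℕ) := fun C =>
    (cofinite ⊓ ⨅ s : {s // r s C}, (Q s.1).1, ⋂ s : {s // r s C}, (Q s.1).2)
  have hQ : ∀ C, Q C = nx C (P C) := fun C => hr.wf.fix_eq _ C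
  clear_value Q
  have hQP1 : ∀ C, (Q C).1 ≤ (P C).1 := fun C => by rw [hQ]; exact hnx1 _ _
  have hQP2 : ∀ C, (Q C).2 ⊆ (P C).2 := fun C => by rw [hQ]; exact hnx2 _ _
  have hQc : ∀ C, (Q C).1 ≤ cofinite := fun C => (hQP1 C).trans inf_le_left
  have hPQ1 : ∀ s C, r s C → (P C).1 ≤ (Q s).1 := fun s C h =>
    inf_le_right.trans (iInf_le (fun s : {s // r s C} => (Q s.1).1) ⟨s, h⟩)
  have hPQ2 : ∀ s C, r s C → (P C).2 ⊆ (Q s).2 := fun s C h =>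
    Set.iInter_subset (fun s : {s // r s C} => (Q s.1).2) ⟨s, h⟩
  have htri : ∀ a b, r a b ∨ a = b ∨ r b a := fun a b => trichotomous_of r a b
  have hdirQ : Directed (· ≥ ·) (fun s => (Q s).1) := by
    intro a b
    rcases htri a b with h | rfl | h
    · exact ⟨b, (hQP1 b).trans (hPQ1 _ _ h), le_rfl⟩
    · exact ⟨a, le_rfl, le_rfl⟩
    · exact ⟨a, le_rfl, (hQP1 a).trans (hPQ1 _ _ h)⟩
  have hbase : Indep A cofinite univ := by
    intro t σ _ B hB
    have h1 : (T A t σ).Infinite := hind t σ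
    have h2 : (T A t σ \ Bᶜ).Infinite := h1.sdiff (mem_cofinite.1 hB)
    obtain ⟨x, hx, hx'⟩ := h2.nonempty
    exact ⟨x, by simpa using hx', hx⟩
  have hne : ∀ C, (P C).2.Nonempty := by
    intro C
    have hsub : (P C).2ᶜ ⊆ ⋃ s : {s // r s C}, ((P s.1).2 \ (Q s.1).2) := by
      intro x hx
      have hx' : ∃ s, r s C ∧ x ∉ (Q s).2 := by
        by_contra hcon
        push Not at hcon
        exact hx (Set.mem_iInter.2 fun s => hcon s.1 s.2)
      obtain ⟨s, ⟨hsC, hxs⟩, hmin⟩ := hr.wf.has_min {s | r s C ∧ x ∉ (Q s).2} hx'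
      refine Set.mem_iUnion.2 ⟨⟨s, hsC⟩, Set.mem_iInter.2 fun u => ?_, hxs⟩
      by_contra hu
      exact hmin u.1 ⟨_root_.trans_of r u.2 hsC, hu⟩ u.2
    have hlt : #{s // r s C} < 𝔠 := by
      have := Cardinal.card_typein_lt (r := r) C hord
      rw [mk_tasks] at this
      exact this
    have hcard : #((P C).2ᶜ : Set (Set ℕ)) < 𝔠 := by
      refine (Cardinal.mk_le_mk_of_subset hsub).trans_lt ?_
      refine (Cardinal.mk_iUnion_le_sum_mk).trans_lt ?_
      refine lt_of_le_of_lt (Cardinal.sum_le_sum _ (fun _ => ℵ₀) ?_) ?_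
      · intro s
        have : ((P s.1).2 \ (Q s.1).2).Finite := by
          rw [hQ]
          exact hnx3 _ _
        exact (Cardinal.lt_aleph0_iff_set_finite.2 this).le
      · rw [Cardinal.sum_const']
        exact Cardinal.mul_lt_of_lt Cardinal.aleph0_le_continuum hlt Cardinal.aleph0_lt_continuum
    by_contra hempty
    rw [Set.not_nonempty_iff_eq_empty] at hempty
    rw [hempty, Set.compl_empty, Cardinal.mk_univ, mk_idx] at hcard
    exact lt_irrefl _ hcard
  have hmain : ∀ C, Indep A (P C).1 (P C).2 ∧ Indep A (Q C).1 (Q C).2 := by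
    intro C
    induction C using hr.wf.induction with
    | _ C ih =>
      have hP : Indep A (P C).1 (P C).2 := by
        refine indep_iInf _ _ _ ?_ (hbase.mono (Set.subset_univ _)) (fun s => hQc s.1) ?_
        · intro a b
          rcases htri a.1 b.1 with h | h | h
          · exact ⟨b, (hQP1 b).trans (hPQ1 _ _ h), le_rfl⟩
          · exact ⟨a, le_rfl, by rw [Subtype.ext h]⟩
          · exact ⟨a, le_rfl, (hQP1 a).trans (hPQ1 _ _ h)⟩
        · intro s
          exact (ih s.1 s.2).2.mono (hPQ2 _ _ s.2)
      refine ⟨hP, ?_⟩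
      rw [hQ]
      exact (hnx4 C (P C) hP (hne C)).1
  refine ⟨⨅ C, (Q C).1, ?_, ?_, ?_⟩
  · refine iInf_neBot_of_directed' hdirQ fun C => ?_
    rw [Filter.neBot_iff]
    intro hbot
    have := (hmain C).2 ∅ (fun _ => ∅) (by simp) ∅ (by rw [hbot]; exact Filter.mem_bot)
    simp at this
  · exact (iInf_le _ (fun _ => ∅)).trans (hQc _)
  · intro C hC
    have h1 : Solved C (Q C).1 := by
      rw [hQ]
      exact (hnx4 C (P C) (hmain C).1 (hne C)).2 hC
    exact h1.mono (iInf_le _ C)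

end WeakPPoint

open WeakPPoint in
/-- Corollary 1: `ω* = βℕ∖ℕ` has a weak P-point.  Points of `ω*` are the nonprincipal
ultrafilters on `ℕ`, i.e. ultrafilters all of whose members are infinite. -/
theorem exists_weak_P_point_omega_star :
    ∃ U : Ultrafilter ℕ,
      (∀ A : Set ℕ, A ∈ U → A.Infinite) ∧
      ∀ V : ℕ → Ultrafilter ℕ,
        (∀ n : ℕ, (∀ A : Set ℕ, A ∈ V n → A.Infinite) ∧ V n ≠ U) →
        ∃ A ∈ U, ∀ n : ℕ, A ∉ V n := by
  classical
  obtain ⟨F, hF, hcof, hsol⟩ := exists_filter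
  obtain ⟨U, hU⟩ := Ultrafilter.exists_le F
  refine ⟨U, ?_, ?_⟩
  · intro A hA hAf
    have h1 : Aᶜ ∈ U := hU (hcof hAf.compl_mem_cofinite)
    exact Ultrafilter.compl_mem_iff_notMem.1 h1 hA
  · intro V hV
    have hB : ∀ n, ∃ B ∈ U, B ∉ V n := by
      intro n
      by_contra hcon
      push Not at hcon
      exact (hV n).2 (Ultrafilter.coe_le_coe.1 (fun B hB => hcon B hB))
    choose B hBU hBV using hB
    let C : ℕ → Set ℕ := fun n => ⋂ k ∈ Finset.range (n + 1), B k
    have hCU : ∀ n, C n ∈ U := fun n =>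
      (Filter.biInter_finset_mem _).2 fun k _ => hBU k
    have hC : Antitone C := by
      intro a b hab
      intro x hx
      simp only [C, Set.mem_iInter, Finset.mem_range] at hx ⊢
      intro k hk
      exact hx k (by omega)
    have hCV : ∀ k n, k ≤ n → C n ∉ V k := by
      intro k n hkn hmem
      refine hBV k (Filter.mem_of_superset hmem ?_)
      exact Set.biInter_subset_of_mem (by simpa using Nat.lt_succ_of_le hkn)
    rcases hsol C hC with ⟨n, hn⟩ | ⟨D, hD, hs⟩
    · exact absurd (hCU n) (Ultrafilter.compl_mem_iff_notMem.1 (hU hn))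
    · have hfin : ∀ k, {X | D X ∈ V k}.Finite := by
        intro k
        by_contra hinf
        obtain ⟨s, hsub, hcard⟩ := Set.Infinite.exists_subset_card_eq hinf (k + 1)
        have h1 : {x | ∀ X ∈ s, x ∈ D X} ∈ V k := by
          have : (⋂ X ∈ s, D X) ∈ V k := (Filter.biInter_finset_mem _).2 fun X hX => hsub hX
          refine Filter.mem_of_superset this ?_
          intro x hx
          simpa using hx
        have h2 := hs s (Finset.card_pos.1 (by omega))
        rw [hcard] at h2
        have h3 : (C (k + 1))ᶜ ∈ V k :=
          Ultrafilter.compl_mem_iff_notMem.2 (hCV k (k + 1) (by omega))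
        exact (hV k).1 _ (Filter.inter_mem h1 h3) h2
      have hcount : (⋃ k, {X | D X ∈ V k}).Countable :=
        Set.countable_iUnion fun k => (hfin k).countable
      have hex : ∃ X, X ∉ ⋃ k, {X | D X ∈ V k} := by
        by_contra hcon
        push Not at hcon
        rw [Set.eq_univ_of_forall hcon] at hcount
        have h4 := Cardinal.le_aleph0_iff_set_countable.2 hcount
        rw [Cardinal.mk_univ, mk_idx] at h4
        exact absurd h4 (not_le.2 Cardinal.aleph0_lt_continuum)
      obtain ⟨X, hX⟩ := hex
      refine ⟨D X, hU (hD X), fun n hn => hX (Set.mem_iUnion.2 ⟨n, hn⟩)⟩
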